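/- arXiv:1907.08084 — 8 statements merged into one kernel-verified Lean document; each statement's English description precedes it below -/
import Mathlib

section
/- For every even positive integer n, there exists a 4-uniform hypergraph on n vertices which is both F_4(5,2)-free and F_4(6,3)-free and which has exactly (1/4)·C(n,3) − n(n−2)/8 edges. -/
/-- An `r`-graph (set of edges) is `F_r(v,e)`-free if there do not exist `e` distinct
edges whose union contains at most `v` vertices. -/
def FrFree {V : Type*} [DecidableEq V] (H : Finset (Finset V)) (v e : ℕ) : Prop :=
  ¬ ∃ S ⊆ H, S.card = e ∧ (S.biUnion id).card ≤ v

/-!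
Identify the vertex set with `ℤ/n` and take as edges the 4-subsets with sum `1`, which is not a
double because `n` is even. More generally, let `s` be an element of a finite abelian group that is
not a double, and take the 4-subsets with sum `s`.

Three vertices of an edge determine the fourth, so two edges span at least six vertices. If three
edges `A`, `B`, `C` spanned only six vertices, the complement of `A` would be `B ∩ C`, and comparing
sums would give `s = 2 ∑ (B ∩ C)`.

For the number of edges, let `N r s` count the `r`-subsets with sum `s`, and `N r s a` those among
them that avoid `a`. Removing `a` from the sets that contain it gives
`N (r + 1) s = N (r + 1) s a + N r (s - a) a`, and hence `(r + 1) N (r + 1) s = ∑ a, N r (s - a) a`.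
Unfolding `4 N 4 s` with these two identities leads down to `r = 1`, where `N 1 t a = 1` as soon as
`a ≠ t`; this holds for the values of `t` that occur because `s` is not a double.
-/

section SumHypergraph

open Finset

lemma one_lt_card_sdiff_of_sum_eq {M : Type*} [AddCancelCommMonoid M] [DecidableEq M]
    {A B : Finset M} (hcard : #A = #B) (hsum : ∑ x ∈ A, x = ∑ x ∈ B, x) (hne : A ≠ B) :
    1 < #(A \ B) := by
  have hcard' : #(A \ B) = #(B \ A) := card_sdiff_comm hcard
  have hsum' : ∑ x ∈ A \ B, x = ∑ x ∈ B \ A, x := sum_sdiff_eq_sum_sdiff_iff.2 hsum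
  by_contra! hle
  rcases Nat.le_one_iff_eq_zero_or_eq_one.1 hle with hzero | hone
  · have hsub : A ⊆ B := sdiff_eq_empty_iff_subset.1 (card_eq_zero.1 hzero)
    exact hne (eq_of_subset_of_card_le hsub hcard.ge)
  · obtain ⟨x, hx⟩ := card_eq_one.1 hone
    obtain ⟨y, hy⟩ := card_eq_one.1 (hcard'.symm.trans hone)
    obtain rfl : x = y := by simpa only [hx, hy, sum_singleton] using hsum'
    have hxA : x ∈ A \ B := hx ▸ mem_singleton_self x
    have hxB : x ∈ B \ A := hy ▸ mem_singleton_self x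
    exact (mem_sdiff.1 hxA).2 (mem_sdiff.1 hxB).1

lemma even_of_union_sdiff_eq_inter {M : Type*} [AddCancelCommMonoid M] [DecidableEq M] {s : M}
    {A B C : Finset M} (hA : ∑ x ∈ A, x = s) (hB : ∑ x ∈ B, x = s) (hC : ∑ x ∈ C, x = s)
    (hsub : A ⊆ B ∪ C) (hcompl : (B ∪ C) \ A = B ∩ C) : Even s := by
  set t := ∑ x ∈ B ∩ C, x
  have hunion : t + s = ∑ x ∈ B ∪ C, x := by rw [← sum_sdiff hsub, hcompl, hA]
  have hdouble : t + s + t = s + s := by rw [hunion, sum_union_inter, hB, hC]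
  exact ⟨t, add_right_cancel (b := s) (by rw [← hdouble, add_right_comm])⟩

lemma subset_union_and_union_sdiff_eq_inter_of_card {α : Type*} [DecidableEq α] {m : ℕ}
    {A B C : Finset α} (hcard : #A + #B + #C = 2 * m) (hAB : m ≤ #(A ∪ B)) (hAC : m ≤ #(A ∪ C))
    (hBC : m ≤ #(B ∪ C)) (hABC : #(A ∪ (B ∪ C)) ≤ m) :
    A ⊆ B ∪ C ∧ (B ∪ C) \ A = B ∩ C := by
  have hABU : A ∪ B = A ∪ (B ∪ C) := eq_of_subset_of_card_le (by grind) (hABC.trans hAB)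
  have hACU : A ∪ C = A ∪ (B ∪ C) := eq_of_subset_of_card_le (by grind) (hABC.trans hAC)
  have hBCU : B ∪ C = A ∪ (B ∪ C) := eq_of_subset_of_card_le (by grind) (hABC.trans hBC)
  have hsub : A ⊆ B ∪ C := union_eq_right.1 hBCU.symm
  refine ⟨hsub, eq_of_subset_of_card_le (fun x hx => ?_) ?_⟩
  · have hxB : x ∈ A ∪ B := by grind
    have hxC : x ∈ A ∪ C := by grind
    grind
  · have := card_union_add_card_inter B C
    have := card_sdiff_add_card_eq_card hsub
    omega

variable {G : Type*} [AddCommGroup G] [Fintype G] [DecidableEq G]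

/-- The `r`-graph on a finite abelian group whose edges are the `r`-subsets with sum `s`. -/
def sumHypergraph (r : ℕ) (s : G) : Finset (Finset G) :=
  {A ∈ powersetCard r univ | ∑ x ∈ A, x = s}

lemma mem_sumHypergraph {r : ℕ} {s : G} {A : Finset G} :
    A ∈ sumHypergraph r s ↔ #A = r ∧ ∑ x ∈ A, x = s := by
  simp [sumHypergraph]

lemma add_two_le_card_union_of_mem_sumHypergraph {r : ℕ} {s : G} {A B : Finset G}
    (hA : A ∈ sumHypergraph r s) (hB : B ∈ sumHypergraph r s) (hne : A ≠ B) :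
    r + 2 ≤ #(A ∪ B) := by
  rw [mem_sumHypergraph] at hA hB
  have := one_lt_card_sdiff_of_sum_eq (hA.1.trans hB.1.symm) (hA.2.trans hB.2.symm) hne
  have := card_sdiff_add_card A B
  omega

theorem frFree_sumHypergraph_two (r : ℕ) (s : G) : FrFree (sumHypergraph r s) (r + 1) 2 := by
  rintro ⟨S, hS, hcard, hspan⟩
  obtain ⟨A, B, hne, rfl⟩ := card_eq_two.1 hcard
  have := add_two_le_card_union_of_mem_sumHypergraph (hS (by simp)) (hS (by simp)) hne
  simp only [biUnion_insert, singleton_biUnion, id] at hspan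
  omega

theorem frFree_sumHypergraph_four_three {s : G} (hs : ¬Even s) :
    FrFree (sumHypergraph 4 s) 6 3 := by
  rintro ⟨S, hS, hcard, hspan⟩
  obtain ⟨A, B, C, hAB, hAC, hBC, rfl⟩ := card_eq_three.1 hcard
  have hA : A ∈ sumHypergraph 4 s := hS (by simp)
  have hB : B ∈ sumHypergraph 4 s := hS (by simp)
  have hC : C ∈ sumHypergraph 4 s := hS (by simp)
  have hspanAB := add_two_le_card_union_of_mem_sumHypergraph hA hB hAB
  have hspanAC := add_two_le_card_union_of_mem_sumHypergraph hA hC hAC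
  have hspanBC := add_two_le_card_union_of_mem_sumHypergraph hB hC hBC
  simp only [biUnion_insert, singleton_biUnion, id] at hspan
  rw [mem_sumHypergraph] at hA hB hC
  obtain ⟨hsub, hcompl⟩ := subset_union_and_union_sdiff_eq_inter_of_card
    (by rw [hA.1, hB.1, hC.1]) hspanAB hspanAC hspanBC hspan
  exact hs (even_of_union_sdiff_eq_inter hA.2 hB.2 hC.2 hsub hcompl)

lemma sum_card_sumHypergraph (r : ℕ) :
    ∑ s : G, #(sumHypergraph r s) = (Fintype.card G).choose r := by
  rw [← card_univ, ← card_powersetCard]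
  exact (card_eq_sum_card_fiberwise fun _ _ => mem_coe.2 (mem_univ _)).symm

lemma card_filter_mem_sumHypergraph_succ (r : ℕ) (s a : G) :
    #{A ∈ sumHypergraph (r + 1) s | a ∈ A} = #{A ∈ sumHypergraph r (s - a) | a ∉ A} := by
  refine card_nbij' (·.erase a) (insert a) ?_ ?_ ?_ ?_
  · intro A hA
    simp only [mem_coe, mem_filter, mem_sumHypergraph] at hA ⊢
    obtain ⟨⟨hcard, hsum⟩, ha⟩ := hA
    simp [card_erase_of_mem ha, sum_erase_eq_sub ha, hcard, hsum]
  · intro A hA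
    simp only [mem_coe, mem_filter, mem_sumHypergraph] at hA ⊢
    obtain ⟨⟨hcard, hsum⟩, ha⟩ := hA
    simp [card_insert_of_notMem ha, sum_insert ha, hcard, hsum]
  · exact fun A hA => insert_erase (mem_filter.1 hA).2
  · exact fun A hA => erase_insert (mem_filter.1 hA).2

lemma card_sumHypergraph_succ (r : ℕ) (s a : G) :
    #(sumHypergraph (r + 1) s) = #{A ∈ sumHypergraph (r + 1) s | a ∉ A} +
      #{A ∈ sumHypergraph r (s - a) | a ∉ A} := by
  rw [← card_filter_mem_sumHypergraph_succ, add_comm (#_), card_filter_add_card_filter_not]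

lemma succ_mul_card_sumHypergraph_succ (r : ℕ) (s : G) :
    (r + 1) * #(sumHypergraph (r + 1) s) = ∑ a, #{A ∈ sumHypergraph r (s - a) | a ∉ A} := by
  calc (r + 1) * #(sumHypergraph (r + 1) s)
      = ∑ A ∈ sumHypergraph (r + 1) s, #A := by
        rw [sum_const_nat fun A hA => (mem_sumHypergraph.1 hA).1, mul_comm]
    _ = ∑ A ∈ sumHypergraph (r + 1) s, #{a | a ∈ A} := by simp only [filter_univ_mem]
    _ = ∑ a, #{A ∈ sumHypergraph (r + 1) s | a ∈ A} :=
        (sum_card_bipartiteAbove_eq_sum_card_bipartiteBelow (· ∈ ·)).symm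
    _ = ∑ a, #{A ∈ sumHypergraph r (s - a) | a ∉ A} := by
        simp only [card_filter_mem_sumHypergraph_succ]

lemma sumHypergraph_one (s : G) : sumHypergraph 1 s = {{s}} := by
  ext A
  rw [mem_sumHypergraph, mem_singleton, card_eq_one]
  constructor
  · rintro ⟨⟨x, rfl⟩, hsum⟩
    rw [← hsum, sum_singleton]
  · rintro rfl
    exact ⟨⟨s, rfl⟩, sum_singleton _ _⟩

lemma card_filter_notMem_sumHypergraph_one {s a : G} (h : a ≠ s) :
    #{A ∈ sumHypergraph 1 s | a ∉ A} = 1 := by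
  simp [sumHypergraph_one, filter_singleton, h]

lemma card_filter_notMem_sumHypergraph_one_sub {s : G} (hs : ¬Even s) (a : G) :
    #{A ∈ sumHypergraph 1 (s - a) | a ∉ A} = 1 :=
  card_filter_notMem_sumHypergraph_one fun h => hs ⟨a, eq_add_of_sub_eq h.symm⟩

lemma two_mul_card_sumHypergraph_two {s : G} (hs : ¬Even s) :
    2 * #(sumHypergraph 2 s) = Fintype.card G := by
  simpa [card_filter_notMem_sumHypergraph_one_sub hs] using succ_mul_card_sumHypergraph_succ 1 s

lemma two_mul_card_filter_notMem_sumHypergraph_three_sub {s : G} (hs : ¬Even s) (a : G) :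
    2 * #{A ∈ sumHypergraph 3 (s - a) | a ∉ A} + Fintype.card G =
      2 * #(sumHypergraph 3 (s - a)) + 2 := by
  have hs' : ¬Even (s - a - a) := fun h => hs (by simpa using h.add (Even.add_self a))
  have hthree :
      #(sumHypergraph 3 (s - a)) = #{A ∈ sumHypergraph 3 (s - a) | a ∉ A} +
        #{A ∈ sumHypergraph 2 (s - a - a) | a ∉ A} :=
    card_sumHypergraph_succ 2 (s - a) a
  have htwo :
      #(sumHypergraph 2 (s - a - a)) = #{A ∈ sumHypergraph 2 (s - a - a) | a ∉ A} + 1 := by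
    rw [← card_filter_notMem_sumHypergraph_one_sub hs' a]
    exact card_sumHypergraph_succ 1 (s - a - a) a
  have := two_mul_card_sumHypergraph_two hs'
  omega

theorem eight_mul_card_sumHypergraph_four {s : G} (hs : ¬Even s) :
    8 * #(sumHypergraph 4 s) + Fintype.card G ^ 2 =
      2 * (Fintype.card G).choose 3 + 2 * Fintype.card G := by
  calc 8 * #(sumHypergraph 4 s) + Fintype.card G ^ 2
      = 2 * ((3 + 1) * #(sumHypergraph (3 + 1) s)) + Fintype.card G * Fintype.card G := by ring
    _ = ∑ a, (2 * #{A ∈ sumHypergraph 3 (s - a) | a ∉ A} + Fintype.card G) := by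
        rw [succ_mul_card_sumHypergraph_succ, sum_add_distrib, mul_sum, sum_const, card_univ,
          smul_eq_mul]
    _ = ∑ a, (2 * #(sumHypergraph 3 (s - a)) + 2) := by
        simp only [two_mul_card_filter_notMem_sumHypergraph_three_sub hs]
    _ = 2 * ∑ a, #(sumHypergraph 3 (s - a)) + 2 * Fintype.card G := by
        rw [sum_add_distrib, mul_sum, sum_const, card_univ, smul_eq_mul,
          mul_comm (Fintype.card G)]
    _ = 2 * ∑ t : G, #(sumHypergraph 3 t) + 2 * Fintype.card G := by
        rw [← (Equiv.subLeft s).sum_comp fun t => #(sumHypergraph 3 t)]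
        rfl
    _ = 2 * (Fintype.card G).choose 3 + 2 * Fintype.card G := by rw [sum_card_sumHypergraph]

end SumHypergraph

open Fin.CommRing in
lemma fin_not_even_one_of_even {n : ℕ} [NeZero n] (hn : Even n) : ¬Even (1 : Fin n) :=
  (Fin.not_even_iff_odd_of_even hn).2 odd_one

/-- For every even positive integer `n`, there exists a 4-uniform hypergraph on `n`
vertices which is both `F₄(5,2)`-free and `F₄(6,3)`-free and which has exactly
`(1/4)·C(n,3) − n(n−2)/8` edges. -/
theorem stmt_0 (n : ℕ) (hn : 0 < n) (heven : Even n) :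
    ∃ H : Finset (Finset (Fin n)),
      (∀ A ∈ H, A.card = 4) ∧
      FrFree H 5 2 ∧ FrFree H 6 3 ∧
      (H.card : ℚ) = (n.choose 3 : ℚ) / 4 - (n : ℚ) * ((n : ℚ) - 2) / 8 := by
  have : NeZero n := ⟨hn.ne'⟩
  have hone : ¬Even (1 : Fin n) := fin_not_even_one_of_even heven
  refine ⟨sumHypergraph 4 1, fun A hA => (mem_sumHypergraph.1 hA).1,
    frFree_sumHypergraph_two 4 1, frFree_sumHypergraph_four_three hone, ?_⟩
  have hcard := congrArg (Nat.cast : ℕ → ℚ) (eight_mul_card_sumHypergraph_four hone)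
  rw [Fintype.card_fin] at hcard
  push_cast at hcard
  linarith
end

section
/- For every positive integer n, in the 4-graph H(n) every 3-element subset of ℤ/nℤ is contained in at most one edge; in particular H(n) is F_4(5,2)-free. -/
/-- `H(n)`: the 4-graph on `ℤ/nℤ` whose edges are the 4-element subsets with
element-sum equal to `1`. -/
def Hgraph (n : ℕ) [NeZero n] : Finset (Finset (ZMod n)) :=
  Finset.univ.filter (fun A => A.card = 4 ∧ A.sum id = 1)

/-!
All but one of the vertices of an edge, together with the prescribed sum, determine the last one by
cancellation. If distinct edges of size `r` share fewer than `k` vertices, then any two of them span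
more than `2 * r - k` vertices; for `r = 4` and `k = 3` this bound is `5`.
-/

theorem eq_of_covBy_of_sum_eq {M : Type*} [AddCommMonoid M] [IsCancelAdd M] {T A B : Finset M}
    (hTA : T ⋖ A) (hTB : T ⋖ B) (hsum : ∑ a ∈ A, a = ∑ b ∈ B, b) : A = B := by
  obtain ⟨a, ha, rfl⟩ := Finset.covBy_iff_exists_cons.1 hTA
  obtain ⟨b, hb, rfl⟩ := Finset.covBy_iff_exists_cons.1 hTB
  rw [Finset.sum_cons, Finset.sum_cons] at hsum
  obtain rfl : a = b := add_right_cancel hsum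
  rfl

theorem frFree_two_of_card_filter_subset_le_one {V : Type*} [DecidableEq V]
    {H : Finset (Finset V)} {r k v : ℕ} (hH : (H : Set (Finset V)).Sized r)
    (hk : ∀ T : Finset V, T.card = k → (H.filter (T ⊆ ·)).card ≤ 1) (hv : v + k ≤ 2 * r) :
    FrFree H v 2 := by
  rintro ⟨S, hSH, hS, hunion⟩
  obtain ⟨A, B, hAB, rfl⟩ := Finset.card_eq_two.1 hS
  obtain ⟨hA, hB⟩ : A ∈ H ∧ B ∈ H := by
    simpa only [Finset.insert_subset_iff, Finset.singleton_subset_iff] using hSH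
  rw [Finset.biUnion_insert, Finset.singleton_biUnion, id, id] at hunion
  have hinter : k ≤ (A ∩ B).card := by
    have hcard := Finset.card_union_add_card_inter A B
    rw [hH hA, hH hB] at hcard
    omega
  obtain ⟨T, hT, hTk⟩ := Finset.exists_subset_card_eq hinter
  obtain ⟨hTA, hTB⟩ := Finset.subset_inter_iff.1 hT
  exact hAB (Finset.card_le_one.1 (hk T hTk) A (Finset.mem_filter.2 ⟨hA, hTA⟩)
    B (Finset.mem_filter.2 ⟨hB, hTB⟩))

theorem stmt_1_general {M : Type*} [AddCommMonoid M] [IsCancelAdd M] [DecidableEq M]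
    {H : Finset (Finset M)} {k : ℕ} {c : M} (hcard : (H : Set (Finset M)).Sized (k + 1))
    (hsum : ∀ A ∈ H, ∑ a ∈ A, a = c) :
    (∀ T : Finset M, T.card = k → (H.filter (T ⊆ ·)).card ≤ 1) ∧ FrFree H (k + 2) 2 := by
  have hk : ∀ T : Finset M, T.card = k → (H.filter (T ⊆ ·)).card ≤ 1 := by
    intro T hT
    have covBy_of_mem : ∀ A ∈ H, T ⊆ A → T ⋖ A := fun A hA hTA =>
      Finset.covBy_iff_exists_insert.2 <|
        Finset.exists_eq_insert_iff.2 ⟨hTA, by rw [hT, hcard hA]⟩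
    simp only [Finset.card_le_one, Finset.mem_filter]
    rintro A ⟨hA, hTA⟩ B ⟨hB, hTB⟩
    exact eq_of_covBy_of_sum_eq (covBy_of_mem A hA hTA) (covBy_of_mem B hB hTB)
      ((hsum A hA).trans (hsum B hB).symm)
  exact ⟨hk, frFree_two_of_card_filter_subset_le_one hcard hk (by omega)⟩

/-- For every positive integer `n`, in the 4-graph `H(n)` every 3-element subset of
`ℤ/nℤ` is contained in at most one edge; in particular `H(n)` is `F₄(5,2)`-free. -/
theorem stmt_1 (n : ℕ) [NeZero n] :
    (∀ T : Finset (ZMod n), T.card = 3 →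
      ((Hgraph n).filter (fun A => T ⊆ A)).card ≤ 1) ∧
    FrFree (Hgraph n) 5 2 :=
  stmt_1_general (k := 3) (c := 1) (fun _ hA => (Finset.mem_filter.1 hA).2.1)
    fun _ hA => (Finset.mem_filter.1 hA).2.2
end

section
/- For every even positive integer n, the number of 4-element subsets {i,j,k,l} of ℤ/nℤ with i+j+k+l ≡ 1 (mod n) equals (1/4)·C(n,3) − n(n−2)/8. -/
/-!
Let `N k S t` be the number of `k`-subsets of `S` with sum `t`. Splitting off an element `i ∈ S`
gives `N (k + 1) S t = N k (S \ {i}) (t - i) + N (k + 1) (S \ {i}) t`, and double counting the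
pairs `i ∈ A` gives `(k + 1) * N (k + 1) S t = ∑ i ∈ S, N k (S \ {i}) (t - i)`.

For `S` a whole finite group `G`, eliminating `N (k + 1) (G \ {i}) (t - i)` between the two yields
`(k + 2) * N (k + 2) G t = C(|G|, k + 1) - ∑ i, N k (G \ {i}) (t - 2i)`, because `t - i` runs
through `G`. If `t` is not a double, neither is `u = t - 2i`; then the pairs `{x, u - x}` partition
`G`, and exactly one of them contains `i`, so `N 2 (G \ {i}) u = |G| / 2 - 1`.
-/

open Finset

section AddCommMonoid

variable {G : Type*} [AddCommMonoid G] [DecidableEq G] {S A : Finset G} {k : ℕ} {i t : G}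

/-- The `k`-element subsets of `S` whose elements add up to `t`. The ground set `S` is a parameter
because the recursions for their number remove elements from it. -/
def powersetCardSum (S : Finset G) (k : ℕ) (t : G) : Finset (Finset G) :=
  {A ∈ S.powersetCard k | A.sum id = t}

lemma mem_powersetCardSum : A ∈ powersetCardSum S k t ↔ A ⊆ S ∧ #A = k ∧ A.sum id = t := by
  rw [powersetCardSum, mem_filter, mem_powersetCard, and_assoc]

lemma powersetCardSum_univ [Fintype G] :
    powersetCardSum univ k t = ({A | #A = k ∧ A.sum id = t} : Finset (Finset G)) := by
  ext A
  simp [mem_powersetCardSum]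

lemma sum_card_powersetCardSum [Fintype G] (S : Finset G) (k : ℕ) :
    ∑ t, #(powersetCardSum S k t) = (#S).choose k := by
  rw [← card_powersetCard]
  exact (card_eq_sum_card_fiberwise fun A _ => mem_univ (A.sum id)).symm

lemma powersetCardSum_one (ht : t ∈ S) : powersetCardSum S 1 t = {{t}} := by
  ext A
  rw [mem_powersetCardSum, mem_singleton]
  constructor
  · rintro ⟨-, hcard, hsum⟩
    obtain ⟨x, rfl⟩ := card_eq_one.1 hcard
    simpa using hsum
  · rintro rfl
    simpa using ht

lemma filter_notMem_powersetCardSum :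
    {A ∈ powersetCardSum S k t | i ∉ A} = powersetCardSum (S.erase i) k t := by
  ext A
  simp only [mem_filter, mem_powersetCardSum, subset_erase]
  tauto

end AddCommMonoid

section AddCommGroup

variable {G : Type*} [AddCommGroup G] [DecidableEq G] {S : Finset G} {k : ℕ} {i t : G}

lemma card_filter_mem_powersetCardSum (hi : i ∈ S) :
    #{A ∈ powersetCardSum S (k + 1) t | i ∈ A} = #(powersetCardSum (S.erase i) k (t - i)) := by
  refine card_nbij' (·.erase i) (insert i) ?_ ?_ ?_ ?_
  · intro A hA
    simp only [mem_coe, mem_filter, mem_powersetCardSum] at hA ⊢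
    obtain ⟨⟨hAS, hcard, hsum⟩, hiA⟩ := hA
    refine ⟨erase_subset_erase i hAS, by rw [card_erase_of_mem hiA, hcard, Nat.add_sub_cancel], ?_⟩
    rw [sum_erase_eq_sub hiA, hsum, id]
  · intro B hB
    simp only [mem_coe, mem_filter, mem_powersetCardSum, subset_erase] at hB ⊢
    obtain ⟨⟨hBS, hiB⟩, hcard, hsum⟩ := hB
    refine ⟨⟨insert_subset hi hBS, by rw [card_insert_of_notMem hiB, hcard], ?_⟩,
      mem_insert_self i B⟩
    rw [sum_insert hiB, hsum, id, add_sub_cancel]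
  · intro A hA
    exact insert_erase (mem_filter.1 hA).2
  · intro B hB
    exact erase_insert (subset_erase.1 (mem_powersetCardSum.1 hB).1).2

lemma card_powersetCardSum_succ (hi : i ∈ S) :
    #(powersetCardSum S (k + 1) t) =
      #(powersetCardSum (S.erase i) k (t - i)) + #(powersetCardSum (S.erase i) (k + 1) t) := by
  rw [← card_filter_mem_powersetCardSum hi, ← filter_notMem_powersetCardSum,
    card_filter_add_card_filter_not]

lemma succ_mul_card_powersetCardSum (S : Finset G) (k : ℕ) (t : G) :
    (k + 1) * #(powersetCardSum S (k + 1) t) =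
      ∑ i ∈ S, #(powersetCardSum (S.erase i) k (t - i)) := by
  have card_filter_mem : ∀ A ∈ powersetCardSum S (k + 1) t, #{i ∈ S | i ∈ A} = k + 1 := by
    intro A hA
    obtain ⟨hAS, hcard, -⟩ := mem_powersetCardSum.1 hA
    rw [filter_mem_eq_inter, inter_eq_right.2 hAS, hcard]
  calc (k + 1) * #(powersetCardSum S (k + 1) t)
      = ∑ A ∈ powersetCardSum S (k + 1) t, #{i ∈ S | i ∈ A} := by
        rw [sum_const_nat card_filter_mem, mul_comm]
    _ = ∑ i ∈ S, #{A ∈ powersetCardSum S (k + 1) t | i ∈ A} :=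
        (sum_card_bipartiteAbove_eq_sum_card_bipartiteBelow fun i A => i ∈ A).symm
    _ = ∑ i ∈ S, #(powersetCardSum (S.erase i) k (t - i)) :=
        sum_congr rfl fun i hi => card_filter_mem_powersetCardSum hi

variable [Fintype G]

lemma add_two_mul_card_powersetCardSum_univ (k : ℕ) (t : G) :
    (k + 2) * #(powersetCardSum univ (k + 2) t) +
        ∑ i, #(powersetCardSum (univ.erase i) k (t - i - i)) =
      (Fintype.card G).choose (k + 1) := by
  calc _ = ∑ i, #(powersetCardSum univ (k + 1) (t - i)) := by
        rw [succ_mul_card_powersetCardSum univ (k + 1) t, ← sum_add_distrib]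
        refine sum_congr rfl fun i _ => ?_
        rw [card_powersetCardSum_succ (mem_univ i), add_comm]
    _ = ∑ s, #(powersetCardSum univ (k + 1) s) :=
        (Equiv.subLeft t).sum_comp fun s => #(powersetCardSum univ (k + 1) s)
    _ = (Fintype.card G).choose (k + 1) := by
        rw [sum_card_powersetCardSum, card_univ]

lemma card_powersetCardSum_erase_one_of_not_even (ht : ¬Even t) (i : G) :
    #(powersetCardSum (univ.erase i) 1 (t - i)) = 1 := by
  have hne : t - i ≠ i := fun h => ht ⟨i, sub_eq_iff_eq_add.1 h⟩
  rw [powersetCardSum_one (mem_erase.2 ⟨hne, mem_univ _⟩), card_singleton]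

lemma two_mul_card_powersetCardSum_univ_two (ht : ¬Even t) :
    2 * #(powersetCardSum univ 2 t) = Fintype.card G := by
  simp only [succ_mul_card_powersetCardSum univ 1 t, card_powersetCardSum_erase_one_of_not_even ht,
    sum_const, card_univ, smul_eq_mul, mul_one]

lemma two_mul_card_powersetCardSum_erase_two (ht : ¬Even t) (i : G) :
    2 * #(powersetCardSum (univ.erase i) 2 t) + 2 = Fintype.card G := by
  rw [← two_mul_card_powersetCardSum_univ_two ht, card_powersetCardSum_succ (mem_univ i),
    card_powersetCardSum_erase_one_of_not_even ht]
  ring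

theorem stmt_2_general (ht : ¬Even t) :
    (#{A : Finset G | #A = 4 ∧ A.sum id = t} : ℚ) =
      ((Fintype.card G).choose 3 : ℚ) / 4 -
        (Fintype.card G : ℚ) * ((Fintype.card G : ℚ) - 2) / 8 := by
  have not_even_sub (i : G) : ¬Even (t - i - i) := fun h =>
    ht (by simpa [sub_sub] using h.add (Even.add_self i))
  have pairs (i : G) : (#(powersetCardSum (univ.erase i) 2 (t - i - i)) : ℚ) =
      ((Fintype.card G : ℚ) - 2) / 2 := by
    have h := two_mul_card_powersetCardSum_erase_two (not_even_sub i) i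
    qify at h
    linarith
  have count := congrArg (Nat.cast : ℕ → ℚ) (add_two_mul_card_powersetCardSum_univ 2 t)
  push_cast at count
  simp only [pairs, sum_const, card_univ, nsmul_eq_mul] at count
  rw [← powersetCardSum_univ]
  linear_combination count / 4

end AddCommGroup

lemma not_even_one_zmod {n : ℕ} (heven : Even n) : ¬Even (1 : ZMod n) := fun h => by
  obtain ⟨r, one_eq⟩ := h.map (ZMod.castHom heven.two_dvd (ZMod 2))
  rw [map_one, CharTwo.add_self_eq_zero] at one_eq
  exact one_ne_zero one_eq

/-- For every even positive integer `n`, the number of 4-element subsets `{i,j,k,l}` of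
`ℤ/nℤ` with `i+j+k+l ≡ 1 (mod n)` equals `(1/4)·C(n,3) − n(n−2)/8`. -/
theorem stmt_2 (n : ℕ) [NeZero n] (heven : Even n) :
    (((Finset.univ : Finset (Finset (ZMod n))).filter
        (fun A => A.card = 4 ∧ A.sum id = 1)).card : ℚ) =
      (n.choose 3 : ℚ) / 4 - (n : ℚ) * ((n : ℚ) - 2) / 8 := by
  simpa only [ZMod.card] using stmt_2_general (not_even_one_zmod heven)
end

section
/- For every integer r > 4 there exists a constant C > 0 such that for every positive integer d, setting n = 2^d, there exists an r-graph on n vertices which is F_r(r+1,2)-free and F_r(r+2,3)-free and has at least (1/r)·C(n,r−1) − C·n^{r−2} edges. -/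
open Finset

section FrFree

variable {V : Type*} [DecidableEq V] {H : Finset (Finset V)} {v : ℕ}

lemma frFree_two_iff :
    FrFree H v 2 ↔ (H : Set (Finset V)).Pairwise fun e f => v < #(e ∪ f) := by
  constructor
  · intro hH e he f hf hef
    by_contra! hv
    exact hH ⟨{e, f}, by grind, card_pair hef, by simpa using hv⟩
  · rintro hH ⟨S, hSH, hS, hv⟩
    obtain ⟨e, f, hef, rfl⟩ := card_eq_two.1 hS
    have hlt : v < #(e ∪ f) := hH (hSH (by simp)) (hSH (by simp)) hef
    simp only [biUnion_insert, singleton_biUnion, id] at hv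
    omega

lemma FrFree.exists_union_eq_of_not_frFree_three (h₂ : FrFree H v 2)
    (h₃ : ¬ FrFree H (v + 1) 3) :
    ∃ a ∈ H, ∃ b ∈ H, ∃ c ∈ H, ∃ W, #W = v + 1 ∧ a ∪ b = W ∧ a ∪ c = W ∧ b ∪ c = W := by
  obtain ⟨S, hSH, hS, hv⟩ := not_not.1 h₃
  obtain ⟨a, b, c, hab, hac, hbc, rfl⟩ := card_eq_three.1 hS
  have ha : a ∈ H := hSH (by simp)
  have hb : b ∈ H := hSH (by simp)
  have hc : c ∈ H := hSH (by simp)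
  simp only [biUnion_insert, singleton_biUnion, id] at hv
  have covers {e f : Finset V} (he : e ∈ H) (hf : f ∈ H) (hef : e ≠ f)
      (hsub : e ∪ f ⊆ a ∪ (b ∪ c)) : e ∪ f = a ∪ (b ∪ c) :=
    eq_of_subset_of_card_le hsub (hv.trans (frFree_two_iff.1 h₂ he hf hef))
  have hab' : a ∪ b = a ∪ (b ∪ c) := covers ha hb hab (by grind)
  have hW : #(a ∪ (b ∪ c)) = v + 1 :=
    hv.antisymm (hab' ▸ frFree_two_iff.1 h₂ ha hb hab)
  exact ⟨a, ha, b, hb, c, hc, _, hW, hab', covers ha hc hac (by grind),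
    covers hb hc hbc subset_union_right⟩

end FrFree

section Dissociated

variable {G : Type*} [AddCommGroup G]

lemma sum_notMem_of_addDissociated {A : Finset G} (hA : AddDissociated (A : Set G)) (h₁ : #A ≠ 1) :
    ∑ x ∈ A, x ∉ A := by
  intro hmem
  have hsingleton : {∑ x ∈ A, x} = A := hA (by simpa using hmem) (by simp) (by simp)
  exact h₁ (hsingleton ▸ card_singleton _)

open scoped Classical in
variable (G) in
/-- The dissociated `k`-subsets of `G`; in an elementary abelian `2`-group these are the linearly
independent `k`-sets. -/
noncomputable def dissociatedSets [Fintype G] (k : ℕ) : Finset (Finset G) :=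
  (powersetCard k univ).filter fun A : Finset G => AddDissociated (A : Set G)

lemma mem_dissociatedSets [Fintype G] {k : ℕ} {A : Finset G} :
    A ∈ dissociatedSets G k ↔ #A = k ∧ AddDissociated (A : Set G) := by
  simp [dissociatedSets]

variable [Module (ZMod 2) G] [DecidableEq G]

lemma exists_sum_eq_of_not_addDissociated {A : Finset G} (hA : ¬ AddDissociated (A : Set G)) :
    ∃ b ∈ A, ∃ B ⊆ A.erase b, ∑ x ∈ B, x = b := by
  obtain ⟨T, U, hTA, hUA, hdisj, hne, hsum⟩ := not_addDissociated_iff_exists_disjoint.1 hA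
  have hTU : T ∪ U ⊆ A := union_subset (mod_cast hTA) (mod_cast hUA)
  have hzero : ∑ x ∈ T ∪ U, x = 0 := by
    rw [sum_union hdisj, hsum, ZModModule.add_self]
  obtain ⟨b, hb⟩ : (T ∪ U).Nonempty := by
    rw [nonempty_iff_ne_empty, Ne, union_eq_empty]
    exact fun hempty => hne (hempty.1.trans hempty.2.symm)
  refine ⟨b, hTU hb, (T ∪ U).erase b, erase_subset_erase b hTU, ?_⟩
  rw [sum_erase_eq_sub hb, hzero, zero_sub, ZModModule.neg_eq_self]

lemma card_powersetCard_sdiff_dissociatedSets_le [Fintype G] (k : ℕ) :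
    #(powersetCard (k + 1) univ \ dissociatedSets G (k + 1)) ≤
      (Fintype.card G).choose k * 2 ^ k := by
  have hcover : powersetCard (k + 1) univ \ dissociatedSets G (k + 1) ⊆
      (powersetCard k univ).biUnion fun A' =>
        A'.powerset.image fun B => insert (∑ x ∈ B, x) A' := by
    intro A hA
    obtain ⟨hA, hdiss⟩ := mem_sdiff.1 hA
    have hAk : #A = k + 1 := (mem_powersetCard.1 hA).2
    have hdep : ¬ AddDissociated (A : Set G) := fun h => hdiss (mem_dissociatedSets.2 ⟨hAk, h⟩)
    obtain ⟨b, hbA, B, hB, hsum⟩ := exists_sum_eq_of_not_addDissociated hdep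
    refine mem_biUnion.2 ⟨A.erase b, ?_, mem_image.2 ⟨B, mem_powerset.2 hB, ?_⟩⟩
    · simp [card_erase_of_mem hbA, hAk]
    · rw [hsum, insert_erase hbA]
  rw [← card_univ, ← card_powersetCard]
  refine (card_le_card hcover).trans (card_biUnion_le_card_mul _ _ _ fun A' hA' => ?_)
  rw [← (mem_powersetCard.1 hA').2, ← card_powerset]
  exact card_image_le

end Dissociated

section ZeroSumGraph

variable {G : Type*} [AddCommGroup G] [Fintype G] [DecidableEq G] {r k : ℕ} {e : Finset G}

variable (G r) in
/-- The `r`-graph on the vertex set `G` whose edges are the `r`-sets with sum zero that contain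
no `4`-set with sum zero. -/
def zeroSumGraph : Finset (Finset G) :=
  {e ∈ powersetCard r univ | ∑ x ∈ e, x = 0 ∧ ∀ T ∈ powersetCard 4 e, ∑ x ∈ T, x ≠ 0}

lemma mem_zeroSumGraph :
    e ∈ zeroSumGraph G r ↔
      #e = r ∧ ∑ x ∈ e, x = 0 ∧ ∀ T ⊆ e, #T = 4 → ∑ x ∈ T, x ≠ 0 := by
  simp [zeroSumGraph]

lemma frFree_zeroSumGraph_two : FrFree (zeroSumGraph G r) (r + 1) 2 := by
  refine frFree_two_iff.2 fun e he f hf hef => ?_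
  obtain ⟨hecard, hesum, -⟩ := mem_zeroSumGraph.1 he
  obtain ⟨hfcard, hfsum, -⟩ := mem_zeroSumGraph.1 hf
  by_contra! hunion
  have hcard : #(e \ f) = #(f \ e) := card_sdiff_comm (hecard.trans hfcard.symm)
  have hsum : ∑ x ∈ e \ f, x = ∑ x ∈ f \ e, x :=
    sum_sdiff_eq_sum_sdiff_iff.2 (hesum.trans hfsum.symm)
  have hpos : 0 < #(e \ f) := by
    refine card_pos.2 (sdiff_nonempty.2 fun hsub => hef ?_)
    exact eq_of_subset_of_card_le hsub (hfcard.trans hecard.symm).le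
  have hone : #(e \ f) = 1 := by
    have := card_sdiff_add_card e f
    omega
  obtain ⟨x, hx⟩ := card_eq_one.1 hone
  obtain ⟨y, hy⟩ := card_eq_one.1 (hcard ▸ hone)
  obtain rfl : x = y := by simpa [hx, hy] using hsum
  simpa [hx, hy] using disjoint_sdiff_sdiff (x := e) (y := f)

lemma frFree_zeroSumGraph_three [Module (ZMod 2) G] : FrFree (zeroSumGraph G r) (r + 2) 3 := by
  by_contra hnot
  obtain ⟨a, ha, b, hb, c, hc, W, hW, hab, hac, hbc⟩ :=
    frFree_zeroSumGraph_two.exists_union_eq_of_not_frFree_three hnot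
  have card_sdiff_edge {f : Finset G} (hf : f ∈ zeroSumGraph G r) (haf : a ∪ f = W) :
      #(a \ f) = 2 := by
    have := card_sdiff_add_card a f
    rw [haf, hW, (mem_zeroSumGraph.1 hf).1] at this
    omega
  have sum_sdiff_edge {f : Finset G} (hf : f ∈ zeroSumGraph G r) (haf : a ∪ f = W) :
      ∑ x ∈ a \ f, x = ∑ x ∈ W, x := by
    rw [← haf, ← sdiff_union_self_eq_union, sum_union sdiff_disjoint,
      (mem_zeroSumGraph.1 hf).2.1, add_zero]
  have hdisj : Disjoint (a \ b) (a \ c) := by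
    have hcover : a ⊆ b ∪ c := hbc ▸ hab ▸ subset_union_left
    refine disjoint_left.2 fun x hxb hxc => ?_
    grind
  refine (mem_zeroSumGraph.1 ha).2.2 (a \ b ∪ a \ c) (union_subset sdiff_subset sdiff_subset) ?_ ?_
  · rw [card_union_of_disjoint hdisj, card_sdiff_edge hb hab, card_sdiff_edge hc hac]
  · rw [sum_union hdisj, sum_sdiff_edge hb hab, sum_sdiff_edge hc hac, ZModModule.add_self]

lemma insert_sum_mem_zeroSumGraph [Module (ZMod 2) G] {A : Finset G}
    (hA : AddDissociated (A : Set G)) (h₁ : #A ≠ 1) (h₃ : #A ≠ 3) :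
    insert (∑ x ∈ A, x) A ∈ zeroSumGraph G (#A + 1) := by
  have hnotMem := sum_notMem_of_addDissociated hA h₁
  refine mem_zeroSumGraph.2 ⟨card_insert_of_notMem hnotMem, ?_, fun T hT hTcard hTsum => ?_⟩
  · rw [sum_insert hnotMem, ZModModule.add_self]
  by_cases hmem : ∑ x ∈ A, x ∈ T
  · have hsum : ∑ x ∈ T.erase (∑ x ∈ A, x), x = ∑ x ∈ A, x := by
      rw [sum_erase_eq_sub hmem, hTsum, zero_sub, ZModModule.neg_eq_self]
    have hTA : T.erase (∑ x ∈ A, x) = A :=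
      hA (mod_cast subset_insert_iff.1 hT) (by simp) hsum
    apply h₃
    rw [← hTA, card_erase_of_mem hmem, hTcard]
  · have hTA : T ⊆ A := (subset_insert_iff_of_notMem hmem).1 hT
    have hempty : T = ∅ := hA (mod_cast hTA) (by simp) (by simpa using hTsum)
    simp [hempty] at hTcard

lemma card_dissociatedSets_le [Module (ZMod 2) G] (h₁ : k ≠ 1) (h₃ : k ≠ 3) :
    #(dissociatedSets G k) ≤ #(zeroSumGraph G (k + 1)) * (k + 1) := by
  have hcover : dissociatedSets G k ⊆ (zeroSumGraph G (k + 1)).biUnion (powersetCard k) := by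
    intro A hA
    obtain ⟨rfl, hdiss⟩ := mem_dissociatedSets.1 hA
    exact mem_biUnion.2 ⟨_, insert_sum_mem_zeroSumGraph hdiss h₁ h₃,
      mem_powersetCard.2 ⟨subset_insert _ _, rfl⟩⟩
  refine (card_le_card hcover).trans (card_biUnion_le_card_mul _ _ _ fun e he => ?_)
  rw [card_powersetCard, (mem_zeroSumGraph.1 he).1, Nat.choose_succ_self_right]

lemma choose_le_add_card_zeroSumGraph_mul [Module (ZMod 2) G] (h₀ : k ≠ 0) (h₂ : k ≠ 2) :
    (Fintype.card G).choose (k + 1) ≤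
      (Fintype.card G).choose k * 2 ^ k + #(zeroSumGraph G (k + 2)) * (k + 2) := by
  calc
    (Fintype.card G).choose (k + 1)
      = #(powersetCard (k + 1) (univ : Finset G)) := by rw [card_powersetCard, card_univ]
    _ ≤ #(powersetCard (k + 1) univ \ dissociatedSets G (k + 1)) +
          #(dissociatedSets G (k + 1)) := card_le_card_sdiff_add_card
    _ ≤ (Fintype.card G).choose k * 2 ^ k + #(zeroSumGraph G (k + 2)) * (k + 2) :=
        add_le_add (card_powersetCard_sdiff_dissociatedSets_le k)
          (card_dissociatedSets_le (by omega) (by omega))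

lemma le_card_zeroSumGraph [Module (ZMod 2) G] (hr : 3 ≤ r) (hr₄ : r ≠ 4) :
    (1 / r : ℝ) * (Fintype.card G).choose (r - 1) -
      2 ^ (r - 2) / r * (Fintype.card G : ℝ) ^ (r - 2) ≤ #(zeroSumGraph G r) := by
  obtain ⟨k, rfl⟩ : ∃ k, r = k + 2 := ⟨r - 2, by omega⟩
  have hchoose : ((Fintype.card G).choose (k + 1) : ℝ) ≤
      (Fintype.card G).choose k * 2 ^ k + #(zeroSumGraph G (k + 2)) * (k + 2 : ℕ) :=
    mod_cast choose_le_add_card_zeroSumGraph_mul (G := G) (k := k) (by omega) (by omega)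
  have hpow : ((Fintype.card G).choose k : ℝ) * 2 ^ k ≤ (Fintype.card G : ℝ) ^ k * 2 ^ k := by
    gcongr
    exact mod_cast Nat.choose_le_pow _ _
  rw [show k + 2 - 1 = k + 1 from rfl, Nat.add_sub_cancel, one_div_mul_eq_div,
    div_mul_eq_mul_div, ← sub_div, div_le_iff₀ (by positivity)]
  linarith

end ZeroSumGraph

lemma exists_module_zmod_two_of_card_eq {V : Type*} [Fintype V] {d : ℕ}
    (hV : Fintype.card V = 2 ^ d) : ∃ _ : AddCommGroup V, Nonempty (Module (ZMod 2) V) := by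
  let φ : V ≃ (Fin d → ZMod 2) := Fintype.equivOfCardEq (by simp [hV])
  exact ⟨φ.addCommGroup, ⟨φ.module (ZMod 2)⟩⟩

theorem stmt_7_general {V : Type*} [Fintype V] [DecidableEq V] {r d : ℕ} (hr : 3 ≤ r)
    (hr₄ : r ≠ 4) (hV : Fintype.card V = 2 ^ d) :
    ∃ H : Finset (Finset V),
      (∀ A ∈ H, #A = r) ∧
      FrFree H (r + 1) 2 ∧ FrFree H (r + 2) 3 ∧
      (1 / r : ℝ) * (Fintype.card V).choose (r - 1) -
        2 ^ (r - 2) / r * (Fintype.card V : ℝ) ^ (r - 2) ≤ #H := by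
  obtain ⟨_, ⟨_⟩⟩ := exists_module_zmod_two_of_card_eq hV
  exact ⟨zeroSumGraph V r, fun A hA => (mem_zeroSumGraph.1 hA).1, frFree_zeroSumGraph_two,
    frFree_zeroSumGraph_three, le_card_zeroSumGraph hr hr₄⟩

/-- For every integer `r > 4` there exists a constant `C > 0` such that for every
positive integer `d`, setting `n = 2^d`, there is an `r`-graph on `n` vertices which is
`F_r(r+1,2)`-free and `F_r(r+2,3)`-free and has at least `(1/r)·C(n,r−1) − C·n^(r−2)`
edges. -/
theorem stmt_7 (r : ℕ) (hr : 4 < r) :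
    ∃ C : ℝ, 0 < C ∧ ∀ d : ℕ, 0 < d →
      ∃ H : Finset (Finset (Fin (2 ^ d))),
        (∀ A ∈ H, A.card = r) ∧
        FrFree H (r + 1) 2 ∧ FrFree H (r + 2) 3 ∧
        (1 / r : ℝ) * ((2 ^ d).choose (r - 1)) - C * (2 ^ d : ℝ) ^ (r - 2) ≤ H.card := by
  refine ⟨2 ^ (r - 2) / r, by positivity, fun d _ => ?_⟩
  simpa using stmt_7_general (by omega) hr.ne' (Fintype.card_fin (2 ^ d))
end

section
/- For every integer r > 4 and every positive integer d, the r-graph H_d is F_r(r+2,3)-free; that is, there do not exist three distinct edges of H_d whose union contains at most r+2 vertices. -/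
/-- `H_d`: the `r`-graph on vertex set `(ℤ/2ℤ)^d` whose edges are the `r`-element
zero-sum subsets containing no zero-sum subset of size `4` and none of size `r − 4`. -/
def Hd (r d : ℕ) : Finset (Finset (Fin d → ZMod 2)) :=
  Finset.univ.filter (fun A => A.card = r ∧ A.sum id = 0 ∧
    ∀ B ∈ A.powerset, (B.card = 4 ∨ B.card = r - 4) → B.sum id ≠ 0)

open Finset

/-- A weak Sidon set: distinct pairs of distinct elements have distinct sums. Pairs are encoded as
two-element subsets. -/
def IsWeakSidon {M : Type*} [AddCommMonoid M] (A : Finset M) : Prop :=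
  Set.InjOn (fun P : Finset M ↦ ∑ x ∈ P, x) (A.powersetCard 2)

lemma eq_of_sdiff_eq_sdiff_swap {α : Type*} [GeneralizedBooleanAlgebra α] {a b : α}
    (h : a \ b = b \ a) : a = b := by
  have hdisj : Disjoint (a \ b) (b \ a) := disjoint_sdiff_sdiff
  have hbot : a \ b = ⊥ := disjoint_self.1 (hdisj.mono_right h.le)
  exact le_antisymm (sdiff_eq_bot_iff.1 hbot) (sdiff_eq_bot_iff.1 (h.symm.trans hbot))

lemma eq_of_card_le_one_of_sum_eq {M : Type*} [AddCommMonoid M] {P Q : Finset M}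
    (hP : #P ≤ 1) (hcard : #P = #Q) (hsum : ∑ x ∈ P, x = ∑ x ∈ Q, x) : P = Q := by
  obtain hP₀ | hP₁ := Nat.le_one_iff_eq_zero_or_eq_one.1 hP
  · rw [card_eq_zero.1 hP₀, card_eq_zero.1 (hcard.symm.trans hP₀)]
  · obtain ⟨p, rfl⟩ := card_eq_one.1 hP₁
    obtain ⟨q, rfl⟩ := card_eq_one.1 (hcard.symm.trans hP₁)
    simpa only [sum_singleton, singleton_inj] using hsum

section CancelMonoid

variable {M : Type*} [AddCancelCommMonoid M] {A B C U : Finset M}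

lemma card_add_two_le_card_union [DecidableEq M] (hne : A ≠ B) (hcard : #A = #B)
    (hsum : ∑ x ∈ A, x = ∑ x ∈ B, x) : #A + 2 ≤ #(A ∪ B) := by
  have hlt : 1 < #(A \ B) := by
    by_contra! hle
    exact hne <| eq_of_sdiff_eq_sdiff_swap <| eq_of_card_le_one_of_sum_eq hle
      (card_sdiff_comm hcard) (sum_sdiff_eq_sum_sdiff_iff.2 hsum)
  have := card_sdiff_add_card A B
  omega

lemma union_eq_of_card_le_add_two [DecidableEq M] (hne : A ≠ B) (hcard : #A = #B)
    (hsum : ∑ x ∈ A, x = ∑ x ∈ B, x) (hA : A ⊆ U) (hB : B ⊆ U) (hU : #U ≤ #A + 2) : A ∪ B = U :=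
  eq_of_subset_of_card_le (union_subset hA hB)
    (hU.trans (card_add_two_le_card_union hne hcard hsum))

lemma not_isWeakSidon_of_card_le_add_two (hAB : A ≠ B) (hAC : A ≠ C) (hBC : B ≠ C)
    (hcardA : #A = #C) (hcardB : #B = #C) (hsumA : ∑ x ∈ A, x = ∑ x ∈ C, x)
    (hsumB : ∑ x ∈ B, x = ∑ x ∈ C, x) (hA : A ⊆ U) (hB : B ⊆ U) (hC : C ⊆ U)
    (hU : #U ≤ #C + 2) : ¬ IsWeakSidon C := by
  classical
  intro hsidon
  have hcard : #A = #B := hcardA.trans hcardB.symm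
  have hsum : ∑ x ∈ A, x = ∑ x ∈ B, x := hsumA.trans hsumB.symm
  have hAC_eq : A ∪ C = U := union_eq_of_card_le_add_two hAC hcardA hsumA hA hC (hcardA ▸ hU)
  have hBC_eq : B ∪ C = U := union_eq_of_card_le_add_two hBC hcardB hsumB hB hC (hcardB ▸ hU)
  have hsdiffA : A \ B ⊆ C := sdiff_le_iff.2 (hA.trans hBC_eq.ge)
  have hsdiffB : B \ A ⊆ C := sdiff_le_iff.2 (hB.trans hAC_eq.ge)
  have hcard_sdiff : #(A \ B) = 2 := by
    have := card_add_two_le_card_union hAB hcard hsum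
    have := card_le_card (union_subset hA hB)
    have := card_sdiff_add_card A B
    omega
  have hpairA : A \ B ∈ C.powersetCard 2 := mem_powersetCard.2 ⟨hsdiffA, hcard_sdiff⟩
  have hpairB : B \ A ∈ C.powersetCard 2 :=
    mem_powersetCard.2 ⟨hsdiffB, (card_sdiff_comm hcard).symm.trans hcard_sdiff⟩
  exact hAB <| eq_of_sdiff_eq_sdiff_swap <|
    hsidon hpairA hpairB (sum_sdiff_eq_sum_sdiff_iff.2 hsum)

end CancelMonoid

lemma isWeakSidon_of_sum_ne_zero {G : Type*} [AddCommGroup G] [Module (ZMod 2) G]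
    {A : Finset G} (hA : ∀ B ⊆ A, #B = 4 → ∑ x ∈ B, x ≠ 0) : IsWeakSidon A := by
  classical
  intro P hP Q hQ (hsum : ∑ x ∈ P, x = ∑ x ∈ Q, x)
  obtain ⟨hPA, hP₂⟩ := mem_powersetCard.1 hP
  obtain ⟨hQA, hQ₂⟩ := mem_powersetCard.1 hQ
  by_contra hne
  have hcard : #(P ∪ Q) = #P + #Q := by
    have := card_add_two_le_card_union hne (hP₂.trans hQ₂.symm) hsum
    have := card_union_le P Q
    omega
  refine hA (P ∪ Q) (union_subset hPA hQA) (by omega) ?_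
  calc ∑ x ∈ P ∪ Q, x = ∑ x ∈ P, x + ∑ x ∈ Q, x :=
        sum_union (card_union_eq_card_add_card.1 hcard)
    _ = 0 := by rw [← hsum, ZModModule.add_self]

theorem stmt_9_general {M : Type*} [AddCancelCommMonoid M] [DecidableEq M]
    {H : Finset (Finset M)} {r : ℕ} {s : M} (hcard : ∀ A ∈ H, #A = r)
    (hsum : ∀ A ∈ H, ∑ x ∈ A, x = s) (hsidon : ∀ A ∈ H, IsWeakSidon A) :
    FrFree H (r + 2) 3 := by
  rintro ⟨S, hSH, hS, hU⟩
  obtain ⟨A, B, C, hAB, hAC, hBC, rfl⟩ := card_eq_three.1 hS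
  obtain ⟨hA, hB, hC⟩ : A ∈ H ∧ B ∈ H ∧ C ∈ H := by
    simpa only [insert_subset_iff, singleton_subset_iff] using hSH
  obtain rfl := hcard C hC
  obtain rfl := hsum C hC
  have hsub {X : Finset M} (hX : X ∈ ({A, B, C} : Finset (Finset M))) :
      X ⊆ ({A, B, C} : Finset (Finset M)).biUnion id := subset_biUnion_of_mem id hX
  exact not_isWeakSidon_of_card_le_add_two hAB hAC hBC (hcard A hA) (hcard B hB)
    (hsum A hA) (hsum B hB) (hsub (by simp)) (hsub (by simp)) (hsub (by simp)) hU (hsidon C hC)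

lemma mem_Hd {r d : ℕ} {A : Finset (Fin d → ZMod 2)} :
    A ∈ Hd r d ↔ #A = r ∧ ∑ x ∈ A, x = 0 ∧
      ∀ B ⊆ A, (#B = 4 ∨ #B = r - 4) → ∑ x ∈ B, x ≠ 0 := by
  simp only [Hd, mem_filter_univ, mem_powerset, id_def]

/-- For every integer `r > 4` and every positive integer `d`, the `r`-graph `H_d` is
`F_r(r+2,3)`-free: there do not exist three distinct edges of `H_d` whose union
contains at most `r+2` vertices. -/
theorem stmt_9 (r d : ℕ) (hr : 4 < r) (hd : 0 < d) :
    FrFree (Hd r d) (r + 2) 3 := by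
  refine stmt_9_general (s := 0) (fun A hA ↦ (mem_Hd.1 hA).1) (fun A hA ↦ (mem_Hd.1 hA).2.1) ?_
  exact fun A hA ↦ isWeakSidon_of_sum_ne_zero fun B hB hB₄ ↦ (mem_Hd.1 hA).2.2 B hB (Or.inl hB₄)
end

section
/- For every positive integer d and every integer k ≥ 1, setting n = 2^d, the number of k-element zero-sum subsets of (ℤ/2ℤ)^d is at most (1/k)·C(n,k−1). -/
/-!
A set with prescribed sum is determined by what is left after deleting one point, since the sum
gives the missing point back. So distinct zero-sum `k`-sets have disjoint shadows. Each shadow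
consists of `k` sets of size `k - 1`, and there are only `C(n, k - 1)` of those.
-/

open Finset
open scoped FinsetFamily

section Shadow

variable {α : Type*} [DecidableEq α] {𝒜 : Finset (Finset α)} {A : Finset α} {k : ℕ}

lemma card_shadow_eq_card_mul (hsized : (𝒜 : Set (Finset α)).Sized k)
    (hdisj : (𝒜 : Set (Finset α)).PairwiseDisjoint fun S ↦ S.image S.erase) :
    #(∂ 𝒜) = #𝒜 * k := by
  rw [shadow, sup_eq_biUnion, card_biUnion hdisj]
  refine sum_const_nat fun S hS ↦ ?_
  rw [card_image_of_injOn S.erase_injOn, hsized hS]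

lemma shadow_subset_powersetCard (h𝒜 : 𝒜 ⊆ A.powersetCard k) :
    ∂ 𝒜 ⊆ A.powersetCard (k - 1) := by
  intro T hT
  obtain ⟨S, hS, x, hx, rfl⟩ := mem_shadow_iff.1 hT
  obtain ⟨hSA, hSk⟩ := mem_powersetCard.1 (h𝒜 hS)
  exact mem_powersetCard.2 ⟨(erase_subset x S).trans hSA, by rw [card_erase_of_mem hx, hSk]⟩

end Shadow

section SubsetSums

variable {M : Type*} [AddCancelCommMonoid M] [DecidableEq M]

lemma eq_of_erase_eq_erase_of_sum_eq {S T : Finset M} {x y : M} (hx : x ∈ S) (hy : y ∈ T)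
    (herase : S.erase x = T.erase y) (hsum : ∑ a ∈ S, a = ∑ a ∈ T, a) : S = T := by
  have hxy : x = y := by
    rw [← add_sum_erase S _ hx, ← add_sum_erase T _ hy, herase] at hsum
    exact add_right_cancel hsum
  rw [← insert_erase hx, ← insert_erase hy, herase, hxy]

lemma pairwiseDisjoint_image_erase_of_sum_eq (c : M) :
    {S : Finset M | ∑ a ∈ S, a = c}.PairwiseDisjoint fun S ↦ S.image S.erase := by
  intro S hS T hT hST
  refine disjoint_left.2 fun U hUS hUT ↦ hST ?_
  obtain ⟨x, hx, rfl⟩ := mem_image.1 hUS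
  obtain ⟨y, hy, hyx⟩ := mem_image.1 hUT
  exact eq_of_erase_eq_erase_of_sum_eq hx hy hyx.symm (hS.trans hT.symm)

theorem stmt_10_general (A : Finset M) (c : M) {k : ℕ} (hk : 1 ≤ k) :
    (#{S ∈ A.powersetCard k | ∑ a ∈ S, a = c} : ℝ) ≤ (1 / k : ℝ) * (#A).choose (k - 1) := by
  set 𝒜 := {S ∈ A.powersetCard k | ∑ a ∈ S, a = c}
  have h𝒜 : 𝒜 ⊆ A.powersetCard k := filter_subset _ _
  have hsized : (𝒜 : Set (Finset M)).Sized k := fun S hS ↦ (mem_powersetCard.1 (h𝒜 hS)).2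
  have hdisj : (𝒜 : Set (Finset M)).PairwiseDisjoint fun S ↦ S.image S.erase :=
    (pairwiseDisjoint_image_erase_of_sum_eq c).subset fun S hS ↦ (mem_filter.1 hS).2
  have hcount : #𝒜 * k ≤ (#A).choose (k - 1) := calc
    #𝒜 * k = #(∂ 𝒜) := (card_shadow_eq_card_mul hsized hdisj).symm
    _ ≤ #(A.powersetCard (k - 1)) := card_le_card (shadow_subset_powersetCard h𝒜)
    _ = (#A).choose (k - 1) := card_powersetCard _ _
  rw [one_div_mul_eq_div, le_div_iff₀ (by exact_mod_cast hk)]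
  exact_mod_cast hcount

end SubsetSums

/-- For every positive integer `d` and every integer `k ≥ 1`, setting `n = 2^d`, the
number of `k`-element zero-sum subsets of `(ℤ/2ℤ)^d` is at most `(1/k)·C(n,k−1)`. -/
theorem stmt_10 (d k : ℕ) (hd : 0 < d) (hk : 1 ≤ k) :
    (((Finset.univ : Finset (Finset (Fin d → ZMod 2))).filter
        (fun S => S.card = k ∧ S.sum id = 0)).card : ℝ)
      ≤ (1 / k : ℝ) * ((2 ^ d).choose (k - 1)) := by
  simpa [← univ_filter_card_eq, filter_filter] using
    stmt_10_general (univ : Finset (Fin d → ZMod 2)) 0 hk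
end

section
/- For every integer r > 4 and all positive integers m ≥ 2 and d, the r-graph H_{m,d} is F_r(r+2,3)-free; that is, there do not exist three distinct edges of H_{m,d} whose union contains at most r+2 vertices. -/
/-- `H_{m,d}`: the `r`-graph on vertex set `ℤ/mℤ × (ℤ/2ℤ)^d` whose edges are the
`r`-element subsets `{(x₁,y₁),…,(x_r,y_r)}` with `y₁,…,y_r` pairwise distinct,
`x₁+⋯+x_r ≡ 0 (mod m)`, and `{y₁,…,y_r}` an edge of `H_d`. -/
def Hmd (r m d : ℕ) [NeZero m] : Finset (Finset (ZMod m × (Fin d → ZMod 2))) :=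
  Finset.univ.filter (fun A => A.card = r ∧ (A.image Prod.snd).card = r ∧
    A.sum Prod.fst = 0 ∧ A.image Prod.snd ∈ Hd r d)

open Finset
open scoped symmDiff

section

variable {V : Type*} [DecidableEq V]

lemma frFree_three_iff {H : Finset (Finset V)} {v : ℕ} :
    FrFree H v 3 ↔ ∀ A ∈ H, ∀ B ∈ H, ∀ C ∈ H, A ≠ B → A ≠ C → B ≠ C → v < #(A ∪ B ∪ C) := by
  have biUnion_eq (A B C : Finset V) : ({A, B, C} : Finset (Finset V)).biUnion id = A ∪ B ∪ C := by
    simp [biUnion_insert, union_assoc]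
  constructor
  · intro hfree A hA B hB C hC hAB hAC hBC
    by_contra! hcard
    refine hfree ⟨{A, B, C}, ?_, card_eq_three.mpr ⟨A, B, C, hAB, hAC, hBC, rfl⟩, ?_⟩
    · simp [insert_subset_iff, hA, hB, hC]
    · rwa [biUnion_eq]
  · rintro hlt ⟨S, hSH, hS, hcard⟩
    obtain ⟨A, B, C, hAB, hAC, hBC, rfl⟩ := card_eq_three.mp hS
    rw [biUnion_eq] at hcard
    exact hcard.not_gt <| hlt A (hSH (by simp)) B (hSH (by simp)) C (hSH (by simp)) hAB hAC hBC

lemma symmDiff_subset_of_card_union_le {A B C : Finset V}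
    (hBC : #(A ∪ B ∪ C) ≤ #(B ∪ C)) (hAC : #(A ∪ B ∪ C) ≤ #(A ∪ C)) : A ∆ B ⊆ C := by
  have hBC_eq : B ∪ C = A ∪ B ∪ C := eq_of_subset_of_card_le (by grind) hBC
  have hAC_eq : A ∪ C = A ∪ B ∪ C := eq_of_subset_of_card_le (by grind) hAC
  have hA : A ⊆ B ∪ C := by grind
  have hB : B ⊆ A ∪ C := by grind
  exact symmDiff_le hA hB

lemma card_symmDiff_add_card_add_card (A B : Finset V) :
    #(A ∆ B) + #A + #B = 2 * #(A ∪ B) := by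
  have hcard : #(A ∆ B) = #(A \ B) + #(B \ A) := card_union_of_disjoint disjoint_sdiff_sdiff
  have hA := card_sdiff_add_card A B
  have hB := card_sdiff_add_card B A
  rw [union_comm] at hB
  omega

lemma sum_symmDiff_of_zmod_two {Y : Type*} [AddCommGroup Y] [Module (ZMod 2) Y]
    (A B : Finset V) (f : V → Y) :
    ∑ x ∈ A ∆ B, f x = ∑ x ∈ A, f x + ∑ x ∈ B, f x := by
  have hsum : ∑ x ∈ A ∆ B, f x = ∑ x ∈ A \ B, f x + ∑ x ∈ B \ A, f x :=
    sum_union disjoint_sdiff_sdiff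
  rw [hsum, ← sum_inter_add_sum_sdiff A B, ← sum_inter_add_sum_sdiff B A, inter_comm B A,
    add_add_add_comm, ZModModule.add_self, zero_add]

end

lemma card_add_two_le_card_union_of_sum_eq {M : Type*} [DecidableEq M] [AddCancelCommMonoid M]
    {A B : Finset M} (hcard : #A = #B) (hsum : ∑ a ∈ A, a = ∑ b ∈ B, b) (hne : A ≠ B) :
    #A + 2 ≤ #(A ∪ B) := by
  have hunion : #(A \ B) + #B = #(A ∪ B) := card_sdiff_add_card A B
  have hcomm : #(A \ B) = #(B \ A) := card_sdiff_comm hcard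
  have hzero : #(A \ B) ≠ 0 := fun h =>
    hne <| eq_of_subset_of_card_le (sdiff_eq_empty_iff_subset.mp (card_eq_zero.mp h)) hcard.ge
  have hone : #(A \ B) ≠ 1 := by
    intro h
    obtain ⟨a, ha⟩ := card_eq_one.mp h
    obtain ⟨b, hb⟩ := card_eq_one.mp (hcomm ▸ h)
    have hab : a = b := by
      simpa only [ha, hb, sum_singleton] using sum_sdiff_eq_sum_sdiff_iff.mpr hsum
    have hdisj : Disjoint (A \ B) (B \ A) := disjoint_sdiff_sdiff
    rw [ha, hb, disjoint_singleton] at hdisj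
    exact hdisj hab
  omega

theorem stmt_13_general {M Y : Type*} [AddCancelCommMonoid M] [DecidableEq M]
    [AddCommGroup Y] [Module (ZMod 2) Y] (φ : M →+ Y) {H : Finset (Finset M)} {r : ℕ} {c : M}
    (hcard : ∀ A ∈ H, #A = r) (hsum : ∀ A ∈ H, ∑ a ∈ A, a = c)
    (hfour : ∀ A ∈ H, ∀ B ⊆ A, #B = 4 → ∑ b ∈ B, φ b ≠ 0) :
    FrFree H (r + 2) 3 := by
  refine frFree_three_iff.mpr fun A hA B hB C hC hAB hAC hBC => ?_
  by_contra! hspan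
  have le_card_union {S T : Finset M} (hS : S ∈ H) (hT : T ∈ H) (hne : S ≠ T) :
      r + 2 ≤ #(S ∪ T) := by
    rw [← hcard S hS]
    exact card_add_two_le_card_union_of_sum_eq ((hcard S hS).trans (hcard T hT).symm)
      ((hsum S hS).trans (hsum T hT).symm) hne
  have hsub : A ∆ B ⊆ C := symmDiff_subset_of_card_union_le
    (hspan.trans (le_card_union hB hC hBC)) (hspan.trans (le_card_union hA hC hAC))
  have hcard_four : #(A ∆ B) = 4 := by
    have hdouble := card_symmDiff_add_card_add_card A B
    have hlower := le_card_union hA hB hAB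
    have hupper : #(A ∪ B) ≤ r + 2 := (card_le_card subset_union_left).trans hspan
    rw [hcard A hA, hcard B hB] at hdouble
    omega
  refine hfour C hC (A ∆ B) hsub hcard_four ?_
  rw [sum_symmDiff_of_zmod_two, ← map_sum, ← map_sum, hsum A hA, hsum B hB, ZModModule.add_self]

section Hmd

variable {r m d : ℕ} [NeZero m] {A : Finset (ZMod m × (Fin d → ZMod 2))}

lemma card_of_mem_Hmd (hA : A ∈ Hmd r m d) : #A = r :=
  (mem_filter.mp hA).2.1

lemma injOn_snd_of_mem_Hmd (hA : A ∈ Hmd r m d) :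
    Set.InjOn Prod.snd (A : Set (ZMod m × (Fin d → ZMod 2))) :=
  card_image_iff.mp ((mem_filter.mp hA).2.2.1.trans (card_of_mem_Hmd hA).symm)

lemma sum_eq_zero_of_mem_Hmd (hA : A ∈ Hmd r m d) : ∑ a ∈ A, a = 0 := by
  obtain ⟨-, -, -, hfst, himage⟩ := mem_filter.mp hA
  have hsnd : ∑ a ∈ A, a.2 = 0 := by
    rw [← (mem_filter.mp himage).2.2.1, sum_image (injOn_snd_of_mem_Hmd hA)]
    rfl
  exact Prod.ext (Prod.fst_sum.trans hfst) (Prod.snd_sum.trans hsnd)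

lemma sum_snd_ne_zero_of_card_eq_four (hA : A ∈ Hmd r m d)
    {B : Finset (ZMod m × (Fin d → ZMod 2))} (hBA : B ⊆ A) (hB : #B = 4) : ∑ b ∈ B, b.2 ≠ 0 := by
  obtain ⟨-, -, -, -, himage⟩ := mem_filter.mp hA
  obtain ⟨-, -, -, hfree⟩ := mem_filter.mp himage
  have hinj : Set.InjOn Prod.snd (B : Set (ZMod m × (Fin d → ZMod 2))) :=
    (injOn_snd_of_mem_Hmd hA).mono (coe_subset.mpr hBA)
  have hne := hfree (B.image Prod.snd) (mem_powerset.mpr (image_subset_image hBA))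
    (Or.inl ((card_image_of_injOn hinj).trans hB))
  rwa [sum_image hinj] at hne

end Hmd

/-- For every integer `r > 4` and all positive integers `m ≥ 2` and `d`, the `r`-graph
`H_{m,d}` is `F_r(r+2,3)`-free: there do not exist three distinct edges of `H_{m,d}`
whose union contains at most `r+2` vertices. -/
theorem stmt_13 (r m d : ℕ) [NeZero m] (hr : 4 < r) (hm : 2 ≤ m) (hd : 0 < d) :
    FrFree (Hmd r m d) (r + 2) 3 :=
  stmt_13_general (AddMonoidHom.snd _ _) (fun _ => card_of_mem_Hmd)
    (fun _ => sum_eq_zero_of_mem_Hmd) (fun _ hA _ => sum_snd_ne_zero_of_card_eq_four hA)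
end

section
/- For every integer r ≥ 3 and every real ε > 0 there exists N such that for every integer n ≥ N: (i) there exists an r-graph on n vertices which is F_r(r+1,2)-free and F_r(r+2,3)-free with at least (1/r − ε)·C(n,r−1) edges, and (ii) every r-graph on n vertices which is F_r(r+1,2)-free and F_r(r+2,3)-free has at most (1/r)·C(n,r−1) edges. In other words, ex(n, F_r(r+1,2) ∪ F_r(r+2,3)) = (1/r − o(1))·C(n,r−1) as n → ∞. -/
open Finset
open scoped symmDiff

section Freeness

variable {V : Type*} [DecidableEq V] {H : Finset (Finset V)} {r v : ℕ}

theorem frFree_two_iff_pairwise_lt_card_union :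
    FrFree H v 2 ↔ (H : Set (Finset V)).Pairwise fun A B => v < #(A ∪ B) := by
  constructor
  · intro hfree A hA B hB hAB
    by_contra! hle
    exact hfree ⟨{A, B}, insert_subset hA (singleton_subset_iff.2 hB), card_pair hAB,
      by simpa only [biUnion_insert, singleton_biUnion, id] using hle⟩
  · rintro hpair ⟨S, hS, hcard, hle⟩
    obtain ⟨A, B, hAB, rfl⟩ := card_eq_two.1 hcard
    rw [biUnion_insert, singleton_biUnion] at hle
    exact (hpair (hS (by simp)) (hS (by simp)) hAB).not_ge hle

theorem frFree_two_iff_pairwise_card_inter_lt (hH : (H : Set (Finset V)).Sized r) :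
    FrFree H (r + 1) 2 ↔ (H : Set (Finset V)).Pairwise fun A B => #(A ∩ B) < r - 1 := by
  rw [frFree_two_iff_pairwise_lt_card_union]
  refine forall₂_congr fun A hA => forall₂_congr fun B hB => imp_congr_right fun _ => ?_
  have hcard := card_union_add_card_inter A B
  rw [hH hA, hH hB] at hcard
  omega

theorem frFree_three_of_symmDiff_not_subset (hH : (H : Set (Finset V)).Sized r)
    (hfree : FrFree H (r + 1) 2)
    (hsub : ∀ A ∈ H, ∀ B ∈ H, ∀ C ∈ H, #(B ∆ C) = 4 → ¬ B ∆ C ⊆ A) : FrFree H (r + 2) 3 := by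
  rw [frFree_two_iff_pairwise_lt_card_union] at hfree
  rintro ⟨S, hS, hcard, hle⟩
  obtain ⟨A, B, C, hAB, hAC, hBC, rfl⟩ := card_eq_three.1 hcard
  obtain ⟨hA, hB, hC⟩ : A ∈ H ∧ B ∈ H ∧ C ∈ H := by simpa [insert_subset_iff] using hS
  set U := ({A, B, C} : Finset (Finset V)).biUnion id
  have subset_U {D} (hD : D ∈ ({A, B, C} : Finset (Finset V))) : D ⊆ U :=
    subset_biUnion_of_mem id hD
  have hAU : A ⊆ U := subset_U (by simp)
  have hBU : B ⊆ U := subset_U (by simp)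
  have hCU : C ⊆ U := subset_U (by simp)
  have union_eq_U {D E} (hD : D ∈ H) (hE : E ∈ H) (hDE : D ≠ E) (hDU : D ⊆ U) (hEU : E ⊆ U) :
      D ∪ E = U :=
    eq_of_subset_of_card_le (union_subset hDU hEU) (hle.trans (hfree hD hE hDE))
  have hABU : A ∪ B = U := union_eq_U hA hB hAB hAU hBU
  have hACU : A ∪ C = U := union_eq_U hA hC hAC hAU hCU
  have hU : #(B ∪ C) = r + 2 :=
    le_antisymm ((card_le_card (union_subset hBU hCU)).trans hle) (hfree hB hC hBC)
  refine hsub A hA B hB C hC ?_ ?_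
  · rw [symmDiff_def, sup_eq_union, card_union_of_disjoint disjoint_sdiff_sdiff]
    have hcardBC := card_sdiff_add_card B C
    have hcardCB := card_sdiff_add_card C B
    rw [hH hC] at hcardBC
    rw [union_comm C B, hH hB] at hcardCB
    omega
  · have hBA : B \ C ⊆ A := sdiff_le_iff'.2 (hBU.trans hACU.ge)
    have hCA : C \ B ⊆ A := sdiff_le_iff'.2 (hCU.trans hABU.ge)
    exact union_subset hBA hCA

end Freeness

section UpperBound

variable {V : Type*} [Fintype V] [DecidableEq V] {H : Finset (Finset V)} {r : ℕ}

theorem card_mul_choose_le_choose_of_card_inter_lt {t : ℕ} (hH : (H : Set (Finset V)).Sized r)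
    (hinter : (H : Set (Finset V)).Pairwise fun A B => #(A ∩ B) < t) :
    #H * r.choose t ≤ (Fintype.card V).choose t := by
  have hdisj : (H : Set (Finset V)).PairwiseDisjoint (powersetCard t) := by
    intro A hA B hB hAB
    refine disjoint_left.2 fun T hTA hTB => (hinter hA hB hAB).not_ge ?_
    rw [mem_powersetCard] at hTA hTB
    exact hTA.2.ge.trans (card_le_card (subset_inter hTA.1 hTB.1))
  calc #H * r.choose t = ∑ A ∈ H, #(A.powersetCard t) :=
        (sum_const_nat fun A hA => by rw [card_powersetCard, hH hA]).symm
    _ = #(H.biUnion (powersetCard t)) := (card_biUnion hdisj).symm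
    _ ≤ #((univ : Finset V).powersetCard t) :=
        card_le_card (biUnion_subset.2 fun A _ => powersetCard_mono (subset_univ A))
    _ = (Fintype.card V).choose t := card_powersetCard t univ

theorem FrFree.card_le_choose_div (hr : 0 < r) (hH : (H : Set (Finset V)).Sized r)
    (hfree : FrFree H (r + 1) 2) :
    (#H : ℝ) ≤ (1 / r : ℝ) * (Fintype.card V).choose (r - 1) := by
  have hcount := card_mul_choose_le_choose_of_card_inter_lt hH
    ((frFree_two_iff_pairwise_card_inter_lt hH).1 hfree)
  rw [Nat.choose_symm_of_eq_add (Nat.sub_add_cancel hr).symm, Nat.choose_one_right] at hcount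
  rw [one_div_mul_eq_div, le_div_iff₀ (by positivity)]
  exact_mod_cast hcount

end UpperBound

section EqualSums

variable {V G : Type*} [DecidableEq V] {A B : Finset V}

theorem card_inter_lt_of_sum_eq [AddCancelCommMonoid G] {f : V → G} (hf : Function.Injective f)
    (hcard : #A = #B) (hAB : A ≠ B) (hsum : ∑ x ∈ A, f x = ∑ x ∈ B, f x) :
    #(A ∩ B) < #A - 1 := by
  by_contra! hle
  have hpos : 0 < #(A \ B) := card_pos.2 <| sdiff_nonempty.2 fun hsub =>
    hAB (eq_of_subset_of_card_le hsub hcard.ge)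
  have hA : #(A \ B) = 1 := by
    have := card_sdiff_add_card_inter A B
    omega
  obtain ⟨a, ha⟩ := card_eq_one.1 hA
  obtain ⟨b, hb⟩ := card_eq_one.1 ((card_sdiff_comm hcard).symm.trans hA)
  have hfab : f a = f b := by
    simpa only [ha, hb, sum_singleton] using sum_sdiff_eq_sum_sdiff_iff.2 hsum
  have hmemA : a ∈ A \ B := ha ▸ mem_singleton_self a
  have hmemB : b ∈ B \ A := hb ▸ mem_singleton_self b
  exact (mem_sdiff.1 hmemB).2 (hf hfab ▸ (mem_sdiff.1 hmemA).1)

theorem sum_symmDiff_eq_zero_of_sum_eq [AddCommGroup G] [Module (ZMod 2) G] {p : V → G}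
    (hsum : ∑ x ∈ A, p x = ∑ x ∈ B, p x) : ∑ x ∈ A ∆ B, p x = 0 := by
  rw [symmDiff_def, sup_eq_union, sum_union disjoint_sdiff_sdiff, sum_sdiff_eq_sum_sdiff_iff.2 hsum,
    ZModModule.add_self]

end EqualSums

section ZeroSumFree

variable {V K : Type*}

/-- `ZeroSumFree p j A` says that no `j`-element subset of `A` has labels `p` summing to zero. -/
def ZeroSumFree [AddCommMonoid K] (p : V → K) (j : ℕ) (A : Finset V) : Prop :=
  ∀ X ⊆ A, #X = j → ∑ x ∈ X, p x ≠ 0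

theorem card_filter_not_zeroSumFree_le [Fintype V] [AddCommGroup K] [DecidableEq K]
    {p : V → K} {j m : ℕ} [DecidablePred (ZeroSumFree p (j + 1))]
    (hfiber : ∀ c, #{x | p x = c} ≤ m) (r : ℕ) :
    #{A ∈ powersetCard r univ | ¬ ZeroSumFree p (j + 1) A} ≤
      (Fintype.card V).choose (r - 1) * (r - 1).choose j * m := by
  classical
  -- Removing a vertex `x` of a zero-sum subset leaves a pair `Y ⊆ B` of sizes `j` and `r - 1` with
  -- `p x = -∑ y ∈ Y, p y`.
  let pairs : Finset (Σ _ : Finset V, Finset V) :=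
    (powersetCard (r - 1) univ).sigma (powersetCard j)
  let completions (t : Σ _ : Finset V, Finset V) : Finset (Finset V) :=
    image (insert · t.1) {x | p x = -∑ y ∈ t.2, p y}
  have hcover : {A ∈ powersetCard r (univ : Finset V) | ¬ ZeroSumFree p (j + 1) A} ⊆
      pairs.biUnion completions := by
    intro A hA
    simp only [ZeroSumFree, not_forall, not_not, mem_filter, mem_powersetCard_univ] at hA
    obtain ⟨hA, X, hXA, hX, hsum⟩ := hA
    obtain ⟨x, hx⟩ : X.Nonempty := card_pos.1 (by omega)
    have hpx : p x = -∑ y ∈ X.erase x, p y := by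
      rw [eq_neg_iff_add_eq_zero, add_sum_erase X p hx, hsum]
    refine mem_biUnion.2 ⟨⟨A.erase x, X.erase x⟩, ?_, ?_⟩
    · simp only [pairs, mem_sigma, mem_powersetCard]
      exact ⟨⟨subset_univ _, by rw [card_erase_of_mem (hXA hx), hA]⟩, erase_subset_erase x hXA,
        by rw [card_erase_of_mem hx, hX, Nat.add_sub_cancel]⟩
    · exact mem_image.2 ⟨x, (mem_filter_univ x).2 hpx, insert_erase (hXA hx)⟩
  have hpairs : #pairs = (Fintype.card V).choose (r - 1) * (r - 1).choose j := by
    rw [card_sigma, sum_const_nat fun B hB => by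
      rw [card_powersetCard, mem_powersetCard_univ.1 hB], card_powersetCard, card_univ]
  calc _ ≤ #(pairs.biUnion completions) := card_le_card hcover
    _ ≤ #pairs * m := card_biUnion_le_card_mul _ _ m fun t _ => card_image_le.trans (hfiber _)
    _ = _ := by rw [hpairs]

end ZeroSumFree

theorem exists_card_le_card_fiber_mul_card {α G : Type*} [Fintype G] [Nonempty G] [DecidableEq G]
    (s : Finset α) (f : α → G) : ∃ y, #s ≤ #{a ∈ s | f a = y} * Fintype.card G := by
  obtain ⟨y, -, hy⟩ := exists_max_image univ (fun y => #{a ∈ s | f a = y}) univ_nonempty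
  exact ⟨y, card_le_mul_card_image_of_maps_to (fun a _ => mem_univ (f a)) _ hy⟩

theorem card_filter_fst_eq_le {V K M : Type*} [Fintype V] [DecidableEq K] [Fintype M]
    (f : V ↪ K × M) (c : K) : #{x | (f x).1 = c} ≤ Fintype.card M := by
  refine card_le_card_of_injOn (fun x => (f x).2) (fun x _ => mem_univ (f x).2) ?_
  intro x hx y hy hxy
  rw [mem_coe, mem_filter_univ] at hx hy
  exact f.injective (Prod.ext (hx.trans hy.symm) hxy)

section Construction

variable {V K M : Type*} [Fintype V] [AddCommGroup K] [AddCommGroup M]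

open scoped Classical in
/-- The `r`-graph on `V` whose edges have label sum `s` and contain no four vertices whose
`K`-labels sum to zero. It is the extremal construction. -/
noncomputable def constantSumGraph (f : V ↪ K × M) (r : ℕ) (s : K × M) : Finset (Finset V) :=
  {A ∈ powersetCard r univ | ZeroSumFree (fun x => (f x).1) 4 A ∧ ∑ x ∈ A, f x = s}

namespace constantSumGraph

variable {f : V ↪ K × M} {r : ℕ} {s : K × M} {A : Finset V}

theorem mem_iff : A ∈ constantSumGraph f r s ↔
    #A = r ∧ ZeroSumFree (fun x => (f x).1) 4 A ∧ ∑ x ∈ A, f x = s := by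
  simp only [constantSumGraph, mem_filter, mem_powersetCard_univ]

theorem sized : (constantSumGraph f r s : Set (Finset V)).Sized r :=
  fun _ hA => (mem_iff.1 hA).1

theorem frFree_two [DecidableEq V] : FrFree (constantSumGraph f r s) (r + 1) 2 := by
  refine (frFree_two_iff_pairwise_card_inter_lt sized).2 fun A hA B hB hAB => ?_
  obtain ⟨hAr, -, hAs⟩ := mem_iff.1 hA
  obtain ⟨hBr, -, hBs⟩ := mem_iff.1 hB
  exact hAr ▸ card_inter_lt_of_sum_eq f.injective (hAr.trans hBr.symm) hAB (hAs.trans hBs.symm)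

theorem frFree_three [DecidableEq V] [Module (ZMod 2) K] :
    FrFree (constantSumGraph f r s) (r + 2) 3 := by
  refine frFree_three_of_symmDiff_not_subset sized frFree_two
    fun A hA B hB C hC hcard hsub => (mem_iff.1 hA).2.1 _ hsub hcard ?_
  have hsum : ∑ x ∈ B, f x = ∑ x ∈ C, f x := (mem_iff.1 hB).2.2.trans (mem_iff.1 hC).2.2.symm
  refine sum_symmDiff_eq_zero_of_sum_eq ?_
  simpa only [Prod.fst_sum] using congrArg Prod.fst hsum

open scoped Classical in
theorem exists_choose_le [Fintype K] [Fintype M] (f : V ↪ K × M) (r : ℕ) :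
    ∃ s, (Fintype.card V).choose r ≤
      #(constantSumGraph f r s) * (Fintype.card K * Fintype.card M) +
        (Fintype.card V).choose (r - 1) * (r - 1).choose 3 * Fintype.card M := by
  let p : V → K := fun x => (f x).1
  obtain ⟨s, hs⟩ := exists_card_le_card_fiber_mul_card
    {A ∈ powersetCard r univ | ZeroSumFree p 4 A} fun A => ∑ x ∈ A, f x
  rw [filter_filter, Fintype.card_prod] at hs
  refine ⟨s, ?_⟩
  calc (Fintype.card V).choose r = #((univ : Finset V).powersetCard r) :=
        (card_powersetCard r univ).symm
    _ = #{A ∈ powersetCard r univ | ZeroSumFree p 4 A} +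
          #{A ∈ powersetCard r univ | ¬ ZeroSumFree p 4 A} :=
        (card_filter_add_card_filter_not _).symm
    _ ≤ _ := add_le_add hs
        (card_filter_not_zeroSumFree_le (card_filter_fst_eq_le f) r)

end constantSumGraph

end Construction

theorem exists_sized_frFree_choose_le (V : Type*) [Fintype V] [DecidableEq V] (k r : ℕ) {m : ℕ}
    (hm : 0 < m) (hV : Fintype.card V ≤ 2 ^ k * m) :
    ∃ H : Finset (Finset V), (H : Set (Finset V)).Sized r ∧
      FrFree H (r + 1) 2 ∧ FrFree H (r + 2) 3 ∧
      (Fintype.card V).choose r ≤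
        #H * (2 ^ k * m) + (Fintype.card V).choose (r - 1) * (r - 1).choose 3 * m := by
  have : NeZero m := ⟨hm.ne'⟩
  have hK : Fintype.card (Fin k → ZMod 2) = 2 ^ k := by simp
  have hM : Fintype.card (ZMod m) = m := ZMod.card m
  obtain ⟨f⟩ : Nonempty (V ↪ (Fin k → ZMod 2) × ZMod m) :=
    Function.Embedding.nonempty_of_card_le (by rwa [Fintype.card_prod, hK, hM])
  obtain ⟨s, hs⟩ := constantSumGraph.exists_choose_le f r
  rw [hK, hM] at hs
  exact ⟨constantSumGraph f r s, constantSumGraph.sized, constantSumGraph.frFree_two,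
    constantSumGraph.frFree_three, hs⟩

theorem choose_pred_mul_div_eq_choose {r : ℕ} (hr : 0 < r) (n : ℕ) :
    (n.choose (r - 1) : ℝ) * ((n + 1 - r) / r) = n.choose r := by
  obtain ⟨q, rfl⟩ := Nat.exists_eq_add_of_lt hr
  have habsorb : ((n : ℝ) + 1) * n.choose q = (n.choose q + n.choose (q + 1)) * (q + 1) := by
    exact_mod_cast Nat.choose_succ_succ' n q ▸ Nat.add_one_mul_choose_eq n q
  simp only [zero_add, Nat.add_sub_cancel]
  field_simp
  push_cast
  linarith

/-- Here `K = 2 ^ k` and `D = C(r-1,3)`: half of `ε` pays for the discarded sets and half for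
rounding `n` up to the multiple `K * m` of `K`. -/
theorem sub_mul_le_div_sub {r n K D m ε : ℝ} (hr : 0 < r) (hε : 0 ≤ ε) (hm : 0 ≤ m)
    (hD : D ≤ ε / 2 * K) (hn : K + r ≤ ε / 2 * n * r) (hle : n ≤ K * m) (hge : K * m ≤ n + K) :
    (1 / r - ε) * (K * m) ≤ (n + 1 - r) / r - D * m := by
  have hround : (n + K) / r - ε / 2 * n ≤ (n + 1 - r) / r := by
    rw [sub_le_iff_le_add, div_add' _ _ _ hr.ne', div_le_div_iff_of_pos_right hr]
    linarith
  calc (1 / r - ε) * (K * m) = K * m / r - ε / 2 * (K * m) - ε / 2 * K * m := by ring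
    _ ≤ (n + K) / r - ε / 2 * n - D * m := by gcongr
    _ ≤ (n + 1 - r) / r - D * m := by gcongr

theorem exists_sized_frFree_card_ge {r : ℕ} (hr : 0 < r) {ε : ℝ} (hε : 0 < ε) :
    ∃ N : ℕ, ∀ (V : Type*) [Fintype V] [DecidableEq V], N ≤ Fintype.card V →
      ∃ H : Finset (Finset V), (H : Set (Finset V)).Sized r ∧
        FrFree H (r + 1) 2 ∧ FrFree H (r + 2) 3 ∧
        ((1 / r : ℝ) - ε) * (Fintype.card V).choose (r - 1) ≤ #H := by
  obtain ⟨k, hk⟩ := pow_unbounded_of_one_lt ((r - 1).choose 3 / (ε / 2)) one_lt_two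
  obtain ⟨N, hN⟩ := exists_nat_ge ((2 ^ k + r : ℝ) / (ε / 2 * r))
  refine ⟨N, fun V _ _ hV => ?_⟩
  set n := Fintype.card V
  set m := n / 2 ^ k + 1
  have hle : n ≤ 2 ^ k * m := (Nat.lt_mul_div_succ n (by positivity)).le
  have hge : 2 ^ k * m ≤ n + 2 ^ k := by
    rw [mul_add, mul_one]
    exact Nat.add_le_add_right (Nat.mul_div_le n _) _
  obtain ⟨H, hH, hfree₂, hfree₃, hcount⟩ :=
    exists_sized_frFree_choose_le V k r (Nat.succ_pos (n / 2 ^ k)) hle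
  refine ⟨H, hH, hfree₂, hfree₃, ?_⟩
  have hD : ((r - 1).choose 3 : ℝ) ≤ ε / 2 * 2 ^ k := by
    rw [div_lt_iff₀' (by positivity)] at hk
    exact hk.le
  have hn : (2 ^ k + r : ℝ) ≤ ε / 2 * n * r := by
    have hNn : (2 ^ k + r : ℝ) / (ε / 2 * r) ≤ n := hN.trans (by exact_mod_cast hV)
    rw [div_le_iff₀ (by positivity)] at hNn
    linarith
  have hratio : (1 / r - ε) * (2 ^ k * m) ≤ (n + 1 - r : ℝ) / r - (r - 1).choose 3 * m :=
    sub_mul_le_div_sub (by positivity) hε.le (by positivity) hD hn (by exact_mod_cast hle)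
      (by exact_mod_cast hge)
  have hcount' : (n.choose r : ℝ) ≤
      #H * (2 ^ k * m) + n.choose (r - 1) * (r - 1).choose 3 * m := by exact_mod_cast hcount
  refine le_of_mul_le_mul_right (a := (2 ^ k * m : ℝ)) ?_ (by positivity)
  calc (1 / r - ε) * n.choose (r - 1) * (2 ^ k * m)
      = n.choose (r - 1) * ((1 / r - ε) * (2 ^ k * m)) := by ring
    _ ≤ n.choose (r - 1) * ((n + 1 - r) / r - (r - 1).choose 3 * m) := by gcongr
    _ = n.choose r - n.choose (r - 1) * (r - 1).choose 3 * m := by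
        rw [mul_sub, choose_pred_mul_div_eq_choose hr, mul_assoc]
    _ ≤ #H * (2 ^ k * m) := sub_le_iff_le_add.2 hcount'

theorem stmt_18_general {r : ℕ} (hr : 0 < r) {ε : ℝ} (hε : 0 < ε) :
    ∃ N : ℕ, ∀ (V : Type*) [Fintype V] [DecidableEq V], N ≤ Fintype.card V →
      (∃ H : Finset (Finset V),
        (H : Set (Finset V)).Sized r ∧ FrFree H (r + 1) 2 ∧ FrFree H (r + 2) 3 ∧
        ((1 / r : ℝ) - ε) * (Fintype.card V).choose (r - 1) ≤ #H) ∧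
      ∀ H : Finset (Finset V), (H : Set (Finset V)).Sized r → FrFree H (r + 1) 2 →
        (#H : ℝ) ≤ (1 / r : ℝ) * (Fintype.card V).choose (r - 1) := by
  obtain ⟨N, hN⟩ := exists_sized_frFree_card_ge hr hε
  exact ⟨N, fun V _ _ hV => ⟨hN V hV, fun H hH hfree => hfree.card_le_choose_div hr hH⟩⟩

/-- For every integer `r ≥ 3` and every real `ε > 0` there exists `N` such that for
every integer `n ≥ N`: (i) there exists an `r`-graph on `n` vertices which is
`F_r(r+1,2)`-free and `F_r(r+2,3)`-free with at least `(1/r − ε)·C(n,r−1)` edges, and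
(ii) every `r`-graph on `n` vertices which is `F_r(r+1,2)`-free and `F_r(r+2,3)`-free
has at most `(1/r)·C(n,r−1)` edges.  In other words,
`ex(n, F_r(r+1,2) ∪ F_r(r+2,3)) = (1/r − o(1))·C(n,r−1)` as `n → ∞`. -/
theorem stmt_18 (r : ℕ) (hr : 3 ≤ r) (ε : ℝ) (hε : 0 < ε) :
    ∃ N : ℕ, ∀ n : ℕ, N ≤ n →
      (∃ H : Finset (Finset (Fin n)),
        (∀ A ∈ H, A.card = r) ∧
        FrFree H (r + 1) 2 ∧ FrFree H (r + 2) 3 ∧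
        ((1 / r : ℝ) - ε) * (n.choose (r - 1)) ≤ H.card) ∧
      (∀ H : Finset (Finset (Fin n)),
        (∀ A ∈ H, A.card = r) →
        FrFree H (r + 1) 2 → FrFree H (r + 2) 3 →
        (H.card : ℝ) ≤ (1 / r : ℝ) * (n.choose (r - 1))) := by
  obtain ⟨N, hN⟩ := stmt_18_general (by omega : 0 < r) hε
  refine ⟨N, fun n hn => ?_⟩
  obtain ⟨hlower, hupper⟩ := by simpa only [Fintype.card_fin] using hN (Fin n) (by simpa using hn)
  exact ⟨hlower, fun H hH hfree _ => hupper H hH hfree⟩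
end
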